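/- Let p be an odd prime, 1 ≤ d ≤ n ≤ m, and let R be a local nearring whose additive group (R,+) is isomorphic to G(p^m, p^n, p^d). Then the subgroup L of all non-invertible elements has index p in (R,+), and the multiplicative group R* has order p^(m+n+d−1)·(p−1). -/

import Mathlib

/-- The carrier of the group `G(p^m, p^n, p^d)`: the set
`ZMod (p^m) × ZMod (p^n) × ZMod (p^d)`. -/
def GCar (p m n d : ℕ) : Type :=
  ZMod (p ^ m) × ZMod (p ^ n) × ZMod (p ^ d)

/-- The multiplication of the group `G(p^m, p^n, p^d)`:
`(x1,x2,x3)·(y1,y2,y3) = (x1+y1, x2+y2, x3+y3 − x̄2·ȳ1)`,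
where the bars denote reduction modulo `p^d`. -/
def Gmul (p m n d : ℕ) (x y : GCar p m n d) : GCar p m n d :=
  (x.1 + y.1, x.2.1 + y.2.1,
    x.2.2 + y.2.2 - (ZMod.cast x.2.1 : ZMod (p ^ d)) * (ZMod.cast y.1 : ZMod (p ^ d)))

/-- The group `G(p^m, p^n, p^d)` (for `d ≤ n ≤ m`). The elements `a = (1,0,0)`,
`b = (0,1,0)`, `c = (0,0,1)` satisfy the defining relations
`a^(p^m) = b^(p^n) = c^(p^d) = 1`, `b⁻¹ab = ac`, `a⁻¹ca = b⁻¹cb = c`,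
and every element of the group is uniquely of the form `a^(x1) b^(x2) c^(x3)`. -/
def Ggroup (p m n d : ℕ) (hdn : d ≤ n) (hdm : d ≤ m) : Group (GCar p m n d) where
  mul := Gmul p m n d
  one := ((0, 0, 0) : ZMod (p ^ m) × ZMod (p ^ n) × ZMod (p ^ d))
  inv x := ((-x.1, -x.2.1,
    -x.2.2 - (ZMod.cast x.2.1 : ZMod (p ^ d)) * (ZMod.cast x.1 : ZMod (p ^ d))) :
      ZMod (p ^ m) × ZMod (p ^ n) × ZMod (p ^ d))
  mul_assoc x y z := by
    have h1 : (p : ℕ) ^ d ∣ p ^ n := pow_dvd_pow p hdn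
    have h2 : (p : ℕ) ^ d ∣ p ^ m := pow_dvd_pow p hdm
    show Gmul p m n d (Gmul p m n d x y) z = Gmul p m n d x (Gmul p m n d y z)
    refine Prod.ext ?_ (Prod.ext ?_ ?_) <;>
      simp [Gmul, ZMod.cast_add h1, ZMod.cast_add h2] <;> ring
  one_mul x := by
    show Gmul p m n d ((0, 0, 0) : ZMod (p ^ m) × ZMod (p ^ n) × ZMod (p ^ d)) x = x
    refine Prod.ext ?_ (Prod.ext ?_ ?_) <;> simp [Gmul, ZMod.cast_zero]
  mul_one x := by
    show Gmul p m n d x ((0, 0, 0) : ZMod (p ^ m) × ZMod (p ^ n) × ZMod (p ^ d)) = x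
    refine Prod.ext ?_ (Prod.ext ?_ ?_) <;> simp [Gmul, ZMod.cast_zero]
  inv_mul_cancel x := by
    have h1 : (p : ℕ) ^ d ∣ p ^ n := pow_dvd_pow p hdn
    have h2 : (p : ℕ) ^ d ∣ p ^ m := pow_dvd_pow p hdm
    show Gmul p m n d _ x = ((0, 0, 0) : ZMod (p ^ m) × ZMod (p ^ n) × ZMod (p ^ d))
    refine Prod.ext ?_ (Prod.ext ?_ ?_) <;>
      simp [Gmul, ZMod.cast_neg h1, ZMod.cast_neg h2] <;> ring

/-- A (left) nearring with (multiplicative) identity: `(R,+)` is a (not necessarily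
abelian) group with neutral element `0`, `(R,·)` is a monoid (so with identity
element `i = 1`), and the left distributive law `x·(y+z) = x·y + x·z` holds. -/
class LeftNearring (R : Type*) extends AddGroup R, Monoid R where
  left_distrib : ∀ x y z : R, x * (y + z) = x * y + x * z

/-!
The argument runs through `σ x = -1 * x`, an involutive automorphism of the additive group of `R`.
A group of odd order with an involutive automorphism `σ` is generated by the elements inverted by
`σ` together with those fixed by `σ`. If all fixed points lie in the Frattini subgroup, they are
superfluous as generators, so `σ` inverts the abelianization, and the fixed points even lie in the
commutator subgroup.

In a local nearring the Frattini subgroup `Φ` of the additive group is contained in the subgroup `L`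
of nonunits, because left multiplications by units are automorphisms that permute the units
transitively. Suppose `L = Φ`. The fixed points of `σ` are nonunits, so they lie in the commutator
subgroup, which is cyclic. In particular `0 * R` lies there, and an idempotent endomorphism with
image in an abelian commutator subgroup is trivial, so `0 * x = 0` for all `x`. Since the group is
noncommutative, `σ` fixes some `c ≠ 0`, and then it fixes all of `c * R`; so left multiplication by
`c` has cyclic image. A unit in its kernel would give `c = 0`, so the kernel lies in `L = Φ`, and
the additive group is cyclic, which is absurd. Hence `L` lies strictly between `Φ`, which has index
`p ^ 2`, and `R`.
-/

open scoped commutatorElement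

section OddOrder

variable {G : Type*} [Group G] {σ : G →* G}

lemma exists_sq_pow_eq_self_of_odd_card (hG : Odd (Nat.card G)) (g : G) :
    ∃ k : ℕ, (g ^ 2) ^ k = g :=
  exists_pow_eq_self_of_coprime
    (Nat.coprime_two_left.mpr (hG.of_dvd_nat (orderOf_dvd_natCard g)))

lemma closure_map_eq_inv_sup_eqLocus_id (hG : Odd (Nat.card G)) (hσ : Function.Involutive σ) :
    Subgroup.closure {g | σ g = g⁻¹} ⊔ σ.eqLocus (.id G) = ⊤ := by
  refine (Subgroup.eq_top_iff' _).mpr fun g ↦ ?_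
  -- `g⁻¹ * σ g` is inverted by `σ`, and so is its square root `w`; hence `g * w` is fixed.
  obtain ⟨k, hk⟩ := exists_sq_pow_eq_self_of_odd_card hG (g⁻¹ * σ g)
  set w := (g⁻¹ * σ g) ^ k
  have hww : w * w = g⁻¹ * σ g := by rw [← hk, ← pow_mul, mul_comm, pow_mul, sq]
  have hw : σ w = w⁻¹ := by
    rw [map_pow, map_mul, map_inv, hσ g, ← inv_pow, mul_inv_rev, inv_inv]
  have hgw : σ (g * w) = g * w := by
    rw [map_mul, hw, mul_inv_eq_iff_eq_mul, mul_assoc, hww, mul_inv_cancel_left]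
  rw [← mul_inv_cancel_right g w]
  exact mul_mem (Subgroup.mem_sup_right hgw)
    (inv_mem (Subgroup.mem_sup_left (Subgroup.subset_closure hw)))

theorem eqLocus_id_le_commutator_of_le_frattini (hG : Odd (Nat.card G))
    (hσ : Function.Involutive σ) (h : σ.eqLocus (.id G) ≤ frattini G) :
    σ.eqLocus (.id G) ≤ commutator G := by
  have : Finite G := Nat.finite_of_card_ne_zero hG.pos.ne'
  have hclosure : Subgroup.closure {g | σ g = g⁻¹} = ⊤ :=
    frattini_nongenerating <| top_le_iff.mp <|
      (closure_map_eq_inv_sup_eqLocus_id hG hσ).ge.trans (sup_le_sup_left h _)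
  have hinv : Abelianization.of.comp σ = (Abelianization.of (G := G))⁻¹ :=
    MonoidHom.eq_of_eqOn_dense hclosure fun g hg ↦ by
      simp [Set.mem_ofPred_eq.mp hg]
  intro g (hg : σ g = g)
  obtain ⟨k, hk⟩ := exists_sq_pow_eq_self_of_odd_card hG g
  rw [← hk]
  refine pow_mem ?_ k
  have hof : Abelianization.of g = (Abelianization.of g)⁻¹ := by
    simpa [hg] using DFunLike.congr_fun hinv g
  rw [← Abelianization.ker_of, MonoidHom.mem_ker, map_pow, sq]
  exact mul_eq_one_iff_eq_inv.mpr hof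

end OddOrder

section Commutator

variable {G H : Type*} [Group G] [Group H]

lemma map_commutator_mulEquiv (e : G ≃* H) : (commutator G).map e.toMonoidHom = commutator H := by
  rw [commutator_def, Subgroup.map_commutator, commutator_def,
    Subgroup.map_top_of_surjective _ e.surjective]

lemma eq_one_of_idempotent_of_range_le_commutator [IsMulCommutative (commutator G)] {f : G →* G}
    (hf : f.comp f = f) (hrange : f.range ≤ commutator G) : f = 1 := by
  have hker : commutator G ≤ f.ker := by
    refine Subgroup.commutator_le.mpr fun x _ y _ ↦ ?_
    rw [MonoidHom.mem_ker, map_commutatorElement, commutatorElement_eq_one_iff_mul_comm]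
    exact setLike_mul_comm (hrange ⟨x, rfl⟩) (hrange ⟨y, rfl⟩)
  ext x
  rw [← hf]
  exact hker (hrange ⟨x, rfl⟩)

end Commutator

section Frattini

variable {G H : Type*} [Group G] [Group H]

lemma frattini_ne_top [IsCoatomic (Subgroup G)] [Nontrivial G] : frattini G ≠ ⊤ := fun h ↦
  bot_ne_top (frattini_nongenerating (K := (⊥ : Subgroup G)) (by rw [h, bot_sup_eq]))

lemma isCoatom_map_of_surjective {f : G →* H} (hf : Function.Surjective f) {M : Subgroup G}
    (hM : IsCoatom M) (hker : f.ker ≤ M) : IsCoatom (M.map f) := by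
  have hcomap : (M.map f).comap f = M := Subgroup.comap_map_eq_self hker
  refine ⟨fun h ↦ hM.1 (by rw [← hcomap, h, Subgroup.comap_top]), fun K hK ↦ ?_⟩
  rw [← Subgroup.comap_lt_comap_of_surjective hf, hcomap] at hK
  exact Subgroup.comap_injective hf ((hM.2 _ hK).trans (Subgroup.comap_top _).symm)

lemma comap_frattini_of_surjective {f : G →* H} (hf : Function.Surjective f)
    (hker : f.ker ≤ frattini G) : (frattini H).comap f = frattini G := by
  refine le_antisymm (le_iInf₂ fun M (hM : IsCoatom M) ↦ ?_)
    (frattini_le_comap_frattini_of_surjective hf)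
  have hkerM : f.ker ≤ M := hker.trans (frattini_le_coatom hM)
  calc (frattini H).comap f ≤ (M.map f).comap f :=
        Subgroup.comap_mono (frattini_le_coatom (isCoatom_map_of_surjective hf hM hkerM))
    _ = M := Subgroup.comap_map_eq_self hkerM

lemma index_frattini_of_surjective {f : G →* H} (hf : Function.Surjective f)
    (hker : f.ker ≤ frattini G) : (frattini G).index = (frattini H).index := by
  rw [← comap_frattini_of_surjective hf hker, Subgroup.index_comap_of_surjective _ hf]

lemma index_frattini_congr (e : G ≃* H) : (frattini G).index = (frattini H).index :=
  index_frattini_of_surjective (f := e.toMonoidHom) e.surjective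
    (((MonoidHom.ker_eq_bot_iff _).mpr e.injective).trans_le bot_le)

lemma isCyclic_of_ker_le_frattini [IsCoatomic (Subgroup G)] {f : G →* H} [IsCyclic f.range]
    (hker : f.ker ≤ frattini G) : IsCyclic G := by
  obtain ⟨⟨_, x, rfl⟩, hx⟩ := IsCyclic.exists_generator (α := f.range)
  refine isCyclic_iff_exists_zpowers_eq_top.mpr ⟨x, frattini_nongenerating ?_⟩
  refine (Subgroup.eq_top_iff' _).mpr fun y ↦ ?_
  obtain ⟨j, hj⟩ := Subgroup.mem_zpowers_iff.mp (hx ⟨f y, y, rfl⟩)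
  have hj' : f x ^ j = f y := congrArg Subtype.val hj
  have hy : (x ^ j)⁻¹ * y ∈ f.ker := by simp [MonoidHom.mem_ker, hj']
  rw [← mul_inv_cancel_left (x ^ j) y]
  exact mul_mem (Subgroup.mem_sup_left ⟨j, rfl⟩) (Subgroup.mem_sup_right (hker hy))

lemma frattini_eq_bot_of_prime_card (hG : (Nat.card G).Prime) : frattini G = ⊥ := by
  have := Fact.mk hG
  have : Finite G := Nat.finite_of_card_ne_zero hG.ne_zero
  have : Nontrivial G := Finite.one_lt_card_iff_nontrivial.mp hG.one_lt
  refine le_bot_iff.mp (frattini_le_coatom ⟨bot_ne_top, fun K hK ↦ ?_⟩)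
  exact K.eq_bot_or_eq_top_of_prime_card.resolve_left hK.ne'

lemma frattini_prod_le : frattini (G × H) ≤ (frattini G).prod (frattini H) :=
  Subgroup.le_prod_iff.mpr
    ⟨Subgroup.map_le_iff_le_comap.mpr
      (frattini_le_comap_frattini_of_surjective (φ := .fst G H) Prod.fst_surjective),
    Subgroup.map_le_iff_le_comap.mpr
      (frattini_le_comap_frattini_of_surjective (φ := .snd G H) Prod.snd_surjective)⟩

end Frattini

section PGroup

variable {G : Type*} [Group G] [Finite G] {p : ℕ} [Fact p.Prime] {M : Subgroup G}

lemma normal_of_isCoatom_of_isPGroup (hG : IsPGroup p G) (hM : IsCoatom M) : M.Normal :=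
  have := hG.isNilpotent
  Subgroup.NormalizerCondition.normal_of_coatom M Group.normalizerCondition_of_isNilpotent hM

lemma index_eq_of_isCoatom_of_isPGroup (hG : IsPGroup p G) (hM : IsCoatom M) : M.index = p := by
  obtain ⟨k, hk⟩ := IsPGroup.iff_card.mp (hG.to_subgroup M)
  obtain ⟨l, hl⟩ := IsPGroup.iff_card.mp hG
  have hlt : k < l := by
    rw [← Nat.pow_lt_pow_iff_right (Fact.out : p.Prime).one_lt, ← hk, ← hl]
    exact lt_of_le_of_ne M.card_le_card_group fun h ↦ hM.1 (M.card_eq_iff_eq_top.mp h)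
  obtain ⟨K, hK, hMK⟩ :=
    Sylow.exists_subgroup_card_pow_succ (hl ▸ pow_dvd_pow p (Nat.succ_le_of_lt hlt)) hk
  have hKtop : K = ⊤ := hM.2 K <| lt_of_le_of_ne hMK fun h ↦ by
    rw [← h, hk] at hK
    exact absurd (Nat.pow_right_injective (Fact.out : p.Prime).two_le hK) (Nat.lt_succ_self k).ne
  have hcard : Nat.card G = p ^ (k + 1) := by rw [← hK, hKtop, Subgroup.card_top]
  have hmul := M.card_mul_index
  rw [hk, hcard, pow_succ] at hmul
  exact Nat.eq_of_mul_eq_mul_left (pow_pos (Fact.out : p.Prime).pos k) hmul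

lemma pow_mem_frattini_of_isPGroup (hG : IsPGroup p G) (g : G) : g ^ p ∈ frattini G := by
  simp only [frattini, Order.radical, Subgroup.mem_iInf]
  intro M hM
  have := normal_of_isCoatom_of_isPGroup hG hM
  exact index_eq_of_isCoatom_of_isPGroup hG hM ▸ M.pow_index_mem g

lemma commutator_le_frattini_of_isPGroup (hG : IsPGroup p G) : commutator G ≤ frattini G := by
  refine le_iInf₂ fun M (hM : IsCoatom M) ↦ ?_
  have := normal_of_isCoatom_of_isPGroup hG hM
  rw [← Subgroup.Normal.quotient_commutative_iff_commutator_le]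
  exact (isCyclic_of_prime_card (p := p) (index_eq_of_isCoatom_of_isPGroup hG hM)).isMulCommutative

end PGroup

namespace LeftNearring

variable {R : Type*} [LeftNearring R] {L : AddSubgroup R}

/-- Left multiplication by `x`, as an endomorphism of the additive group of `R` written
multiplicatively; this notation makes the commutator and Frattini subgroups available. -/
def mulLeft (x : R) : Multiplicative R →* Multiplicative R :=
  AddMonoidHom.toMultiplicative (AddMonoidHom.mk' (x * ·) (left_distrib x))

lemma mulLeft_one : mulLeft (1 : R) = .id _ :=
  MonoidHom.ext fun y ↦ congrArg Multiplicative.ofAdd (one_mul y.toAdd)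

lemma mulLeft_mul (x y : R) : mulLeft (x * y) = (mulLeft x).comp (mulLeft y) :=
  MonoidHom.ext fun z ↦ congrArg Multiplicative.ofAdd (mul_assoc x y z.toAdd)

lemma mulLeft_ofAdd (x y : R) : mulLeft x (Multiplicative.ofAdd y) = Multiplicative.ofAdd (x * y) :=
  rfl

protected lemma mul_zero (x : R) : x * 0 = 0 :=
  map_one (mulLeft x)

protected lemma mul_neg (x y : R) : x * -y = -(x * y) :=
  map_inv (mulLeft x) (Multiplicative.ofAdd y)

lemma involutive_mulLeft_neg_one : Function.Involutive (mulLeft (-1 : R)) := fun x ↦ by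
  have h : (-1 : R) * -1 = 1 := by rw [LeftNearring.mul_neg, mul_one, neg_neg]
  rw [← MonoidHom.comp_apply, ← mulLeft_mul, h, mulLeft_one, MonoidHom.id_apply]

lemma range_mulLeft_le_eqLocus_id {c : R} (hc : -1 * c = c) :
    (mulLeft c).range ≤ (mulLeft (-1 : R)).eqLocus (.id _) := by
  rintro _ ⟨x, rfl⟩
  change ((mulLeft (-1)).comp (mulLeft c)) x = mulLeft c x
  rw [← mulLeft_mul, hc]

lemma exists_ne_zero_neg_one_mul_eq_self [Finite R] (hcomm : ¬IsMulCommutative (Multiplicative R)) :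
    ∃ c : R, c ≠ 0 ∧ -1 * c = c := by
  by_contra! hfix
  have hfpf : MonoidHom.FixedPointFree (mulLeft (-1 : R)) := fun g hg ↦
    by_contra fun hne ↦ hfix g.toAdd hne hg
  exact hcomm (.of_comm (hfpf.commute_all_of_involutive involutive_mulLeft_neg_one))

lemma not_isUnit_of_neg_one_mul_eq_self (hodd : Odd (Nat.card R)) (hzero : ¬IsUnit (0 : R)) {x : R}
    (hx : -1 * x = x) : ¬IsUnit x := by
  intro hu
  have hneg : (-1 : R) = 1 := hu.mul_eq_right.mp hx
  obtain ⟨k, hk⟩ := exists_sq_pow_eq_self_of_odd_card (G := Multiplicative R) hodd (.ofAdd 1)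
  have hsq : Multiplicative.ofAdd (1 : R) ^ 2 = 1 := by
    rw [sq, mul_eq_one_iff_eq_inv]
    exact congrArg Multiplicative.ofAdd hneg.symm
  have hone : (1 : R) = 0 := by rwa [hsq, one_pow, eq_comm, ofAdd_eq_one] at hk
  exact hzero (hone ▸ isUnit_one)

lemma not_isUnit_of_mul_eq_zero (hzero : ∀ x : R, 0 * x = 0) {c x : R} (hc : c ≠ 0)
    (h : c * x = 0) : ¬IsUnit x := by
  rintro ⟨u, rfl⟩
  exact hc (by rw [← Units.mul_inv_cancel_right c u, h, hzero])

lemma ofAdd_mem_of_characteristic {H : Subgroup (Multiplicative R)} [H.Characteristic] {u v : R}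
    (hu : IsUnit u) (hv : IsUnit v) (hmem : Multiplicative.ofAdd u ∈ H) :
    Multiplicative.ofAdd v ∈ H := by
  obtain ⟨w, hw⟩ : ∃ w : Rˣ, w * u = v :=
    ⟨hv.unit * hu.unit⁻¹, by rw [Units.val_mul, mul_assoc, hu.val_inv_mul, mul_one, hv.unit_spec]⟩
  let e : Multiplicative R ≃* Multiplicative R :=
    (mulLeft (w : R)).toMulEquiv (mulLeft ↑w⁻¹)
      (by rw [← mulLeft_mul, Units.inv_mul, mulLeft_one])
      (by rw [← mulLeft_mul, Units.mul_inv, mulLeft_one])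
  rw [← hw, ← mulLeft_ofAdd]
  exact Subgroup.characteristic_iff_le_comap.mp ‹_› e hmem

lemma le_toSubgroup_of_characteristic (hL : ∀ x : R, x ∈ L ↔ ¬IsUnit x)
    {H : Subgroup (Multiplicative R)} [H.Characteristic] (hH : H ≠ ⊤) : H ≤ L.toSubgroup := by
  intro x hx
  rw [Multiplicative.mem_toSubgroup, hL]
  refine fun hu ↦ hH ((Subgroup.eq_top_iff' H).mpr fun y ↦ ?_)
  -- `H` contains all units, hence also `y = (y + 1) - 1` for every `y` in `L`.
  have hunit {v : R} (hv : IsUnit v) : Multiplicative.ofAdd v ∈ H :=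
    ofAdd_mem_of_characteristic hu hv hx
  by_cases hy : IsUnit y.toAdd
  · exact hunit hy
  · have hy1 : IsUnit (y.toAdd + 1) := by
      by_contra h
      exact (hL 1).mp ((add_mem_cancel_left ((hL _).mpr hy)).mp ((hL _).mpr h)) isUnit_one
    exact (mul_mem_cancel_right (hunit isUnit_one)).mp (hunit hy1)

theorem not_toSubgroup_le_frattini (hodd : Odd (Nat.card R))
    [IsCyclic (commutator (Multiplicative R))] (hcomm : ¬IsMulCommutative (Multiplicative R))
    (hL : ∀ x : R, x ∈ L ↔ ¬IsUnit x) : ¬L.toSubgroup ≤ frattini (Multiplicative R) := by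
  intro hle
  have : Finite R := Nat.finite_of_card_ne_zero hodd.pos.ne'
  have hfix : (mulLeft (-1 : R)).eqLocus (.id _) ≤ commutator (Multiplicative R) :=
    eqLocus_id_le_commutator_of_le_frattini hodd involutive_mulLeft_neg_one fun x hx ↦
      hle ((hL _).mpr (not_isUnit_of_neg_one_mul_eq_self hodd ((hL 0).mp L.zero_mem) hx))
  have hrange {c : R} (hc : -1 * c = c) : (mulLeft c).range ≤ commutator (Multiplicative R) :=
    (range_mulLeft_le_eqLocus_id hc).trans hfix
  have hzero : mulLeft (0 : R) = 1 :=
    eq_one_of_idempotent_of_range_le_commutator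
      (by rw [← mulLeft_mul, LeftNearring.mul_zero]) (hrange (LeftNearring.mul_zero _))
  obtain ⟨c, hc0, hc⟩ := exists_ne_zero_neg_one_mul_eq_self hcomm
  have hker : (mulLeft c).ker ≤ frattini (Multiplicative R) := fun x hx ↦ hle <| (hL _).mpr <|
    not_isUnit_of_mul_eq_zero (fun y ↦ DFunLike.congr_fun hzero (.ofAdd y)) hc0 hx
  have : IsCyclic (mulLeft c).range := Subgroup.isCyclic_of_le (hrange hc)
  exact hcomm (isCyclic_of_ker_le_frattini hker).isMulCommutative

theorem index_nonunits_eq_of_index_frattini (hodd : Odd (Nat.card R))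
    [IsCyclic (commutator (Multiplicative R))] (hcomm : ¬IsMulCommutative (Multiplicative R))
    {p : ℕ} (hp : p.Prime) (hΦ : (frattini (Multiplicative R)).index = p ^ 2)
    (hL : ∀ x : R, x ∈ L ↔ ¬IsUnit x) : L.index = p := by
  have : Finite R := Nat.finite_of_card_ne_zero hodd.pos.ne'
  have : Nontrivial (Multiplicative R) := not_subsingleton_iff_nontrivial.mp fun _ ↦
    hcomm (.of_comm fun _ _ ↦ Subsingleton.elim _ _)
  have hΦL : frattini (Multiplicative R) < L.toSubgroup :=
    lt_of_le_not_ge (le_toSubgroup_of_characteristic hL frattini_ne_top)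
      (not_toSubgroup_le_frattini hodd hcomm hL)
  have hlt : L.index < p ^ 2 := by
    rw [← hΦ, ← AddSubgroup.index_toSubgroup]
    exact Subgroup.index_strictAnti hΦL
  have hdvd : L.index ∣ p ^ 2 := by
    rw [← hΦ, ← AddSubgroup.index_toSubgroup]
    exact Subgroup.index_dvd_of_le hΦL.le
  obtain ⟨k, -, hk⟩ := (Nat.dvd_prime_pow hp).mp hdvd
  have hk2 : k < 2 := (Nat.pow_lt_pow_iff_right hp.one_lt).mp (hk ▸ hlt)
  have hk0 : k ≠ 0 := by
    rintro rfl
    exact (hL 1).mp (AddSubgroup.index_eq_one.mp hk ▸ AddSubgroup.mem_top 1) isUnit_one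
  rw [hk, show k = 1 by lia, pow_one]

lemma card_units_eq [Finite R] (hL : ∀ x : R, x ∈ L ↔ ¬IsUnit x) :
    Nat.card Rˣ = Nat.card L * (L.index - 1) := by
  have hrange : Set.range (Units.val : Rˣ → R) = (L : Set R)ᶜ := by
    ext x
    simp [hL, IsUnit]
  calc Nat.card Rˣ = ((L : Set R)ᶜ).ncard := by
        rw [← hrange, Set.ncard_range_of_injective Units.val_injective]
    _ = Nat.card L * (L.index - 1) := by
        rw [Set.ncard_compl, ← L.card_mul_index, Nat.mul_sub_one]
        rfl

end LeftNearring

section ZMod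

lemma exists_nsmul_eq_of_castHom_eq_zero {k l : ℕ} (h : k ∣ l) {a : ZMod l}
    (ha : ZMod.castHom h (ZMod k) a = 0) : ∃ b, k • b = a := by
  obtain ⟨j, rfl⟩ := ZMod.intCast_surjective a
  rw [map_intCast, ZMod.intCast_zmod_eq_zero_iff_dvd] at ha
  obtain ⟨i, rfl⟩ := ha
  exact ⟨i, by simp⟩

variable {p : ℕ} [Fact p.Prime] {m n : ℕ}

lemma frattini_prod_zmod_prime :
    frattini (Multiplicative (ZMod p) × Multiplicative (ZMod p)) = ⊥ := by
  have h : frattini (Multiplicative (ZMod p)) = ⊥ :=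
    frattini_eq_bot_of_prime_card ((Nat.card_zmod p).symm ▸ Fact.out)
  simpa [h, Subgroup.bot_prod_bot] using
    frattini_prod_le (G := Multiplicative (ZMod p)) (H := Multiplicative (ZMod p))

lemma index_frattini_prod_zmod_prime_pow (hm : m ≠ 0) (hn : n ≠ 0) :
    (frattini (Multiplicative (ZMod (p ^ m)) × Multiplicative (ZMod (p ^ n)))).index = p ^ 2 := by
  have hpgroup : IsPGroup p (Multiplicative (ZMod (p ^ m)) × Multiplicative (ZMod (p ^ n))) :=
    .of_card (n := m + n) (by simp [pow_add])
  have hpm : p ∣ p ^ m := dvd_pow_self p hm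
  have hpn : p ∣ p ^ n := dvd_pow_self p hn
  let reduction := MonoidHom.prodMap
    (ZMod.castHom hpm (ZMod p)).toAddMonoidHom.toMultiplicative
    (ZMod.castHom hpn (ZMod p)).toAddMonoidHom.toMultiplicative
  have hsurj : Function.Surjective reduction :=
    (ZMod.castHom_surjective hpm).prodMap (ZMod.castHom_surjective hpn)
  have hker : reduction.ker ≤ frattini _ := by
    rintro ⟨a, b⟩ hab
    obtain ⟨a', ha'⟩ := exists_nsmul_eq_of_castHom_eq_zero hpm (congrArg Prod.fst hab)
    obtain ⟨b', hb'⟩ := exists_nsmul_eq_of_castHom_eq_zero hpn (congrArg Prod.snd hab)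
    have hpow : (Multiplicative.ofAdd a', Multiplicative.ofAdd b') ^ p = (a, b) :=
      Prod.ext ha' hb'
    exact hpow ▸ pow_mem_frattini_of_isPGroup hpgroup _
  rw [index_frattini_of_surjective hsurj hker, frattini_prod_zmod_prime, Subgroup.index_bot]
  simp [sq]

end ZMod

namespace GCar

variable {p m n d : ℕ}

lemma natCard_eq : Nat.card (GCar p m n d) = p ^ (m + n + d) := by
  change Nat.card (ZMod (p ^ m) × ZMod (p ^ n) × ZMod (p ^ d)) = _
  simp only [Nat.card_prod, Nat.card_zmod, pow_add, mul_assoc]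

/-- The element `a^x b^y c^z` of `G(p^m, p^n, p^d)`. -/
def mk (x : ZMod (p ^ m)) (y : ZMod (p ^ n)) (z : ZMod (p ^ d)) : GCar p m n d :=
  (x, y, z)

lemma mk_inj {x x' : ZMod (p ^ m)} {y y' : ZMod (p ^ n)} {z z' : ZMod (p ^ d)} :
    mk x y z = mk x' y' z' ↔ x = x' ∧ y = y' ∧ z = z' :=
  Prod.mk_inj.trans (and_congr_right' Prod.mk_inj)

variable [hdn : Fact (d ≤ n)] [hdm : Fact (d ≤ m)]

/-- The group structure of `G(p^m, p^n, p^d)`, with the constraints on `d` found by instance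
search. -/
instance : Group (GCar p m n d) :=
  Ggroup p m n d hdn.out hdm.out

lemma mk_mul_mk (x x' : ZMod (p ^ m)) (y y' : ZMod (p ^ n)) (z z' : ZMod (p ^ d)) :
    mk x y z * mk x' y' z' = mk (x + x') (y + y') (z + z' - y.cast * x'.cast) :=
  rfl

lemma isPGroup : IsPGroup p (GCar p m n d) :=
  .of_card natCard_eq

lemma not_isMulCommutative (hpd : p ^ d ≠ 1) : ¬IsMulCommutative (GCar p m n d) := by
  intro _
  have : Nontrivial (ZMod (p ^ d)) := ZMod.nontrivial_iff.mpr hpd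
  have hab : (mk 1 0 0 * mk 0 1 0 : GCar p m n d) = mk 0 1 0 * mk 1 0 0 := mul_comm' _ _
  simp [mk_mul_mk, mk_inj, ZMod.cast_one (pow_dvd_pow p hdm.out),
    ZMod.cast_one (pow_dvd_pow p hdn.out)] at hab

variable (p m n d) in
/-- The projection of `G(p^m, p^n, p^d)` to the first two coordinates, which turns out to be its
abelianization. -/
def abelianProj :
    GCar p m n d →* Multiplicative (ZMod (p ^ m)) × Multiplicative (ZMod (p ^ n)) where
  toFun x := (.ofAdd x.1, .ofAdd x.2.1)
  map_one' := rfl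
  map_mul' _ _ := rfl

lemma abelianProj_surjective : Function.Surjective (abelianProj p m n d) :=
  fun ⟨x, y⟩ ↦ ⟨mk x y 0, rfl⟩

lemma mem_ker_abelianProj {g : GCar p m n d} :
    g ∈ (abelianProj p m n d).ker ↔ ∃ z, g = mk 0 0 z := by
  refine ⟨fun h ↦ ⟨g.2.2, mk_inj.mpr ⟨congrArg Prod.fst h, congrArg Prod.snd h, rfl⟩⟩, ?_⟩
  rintro ⟨z, rfl⟩
  rfl

lemma ker_abelianProj : (abelianProj p m n d).ker = commutator (GCar p m n d) := by
  refine le_antisymm (fun g hg ↦ ?_) (Abelianization.commutator_subset_ker _)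
  obtain ⟨z, rfl⟩ := mem_ker_abelianProj.mp hg
  obtain ⟨x, rfl⟩ := ZMod.castHom_surjective (pow_dvd_pow p hdm.out) z
  have hcomm : mk 0 0 x.cast = ⁅(mk x 0 0 : GCar p m n d), (mk 0 1 0 : GCar p m n d)⁆ := by
    rw [commutatorElement_def, eq_mul_inv_iff_mul_eq, eq_mul_inv_iff_mul_eq]
    simp [mk_mul_mk, ZMod.cast_one (pow_dvd_pow p hdn.out)]
  rw [ZMod.castHom_apply, hcomm]
  exact Subgroup.commutator_mem_commutator (Subgroup.mem_top _) (Subgroup.mem_top _)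

instance : IsCyclic (commutator (GCar p m n d)) := by
  let f : Multiplicative (ZMod (p ^ d)) →* GCar p m n d :=
    { toFun z := mk 0 0 z.toAdd
      map_one' := rfl
      map_mul' z z' := by simp [mk_mul_mk] }
  have hf : f.range = commutator (GCar p m n d) := by
    ext g
    rw [← ker_abelianProj, mem_ker_abelianProj]
    exact exists_congr fun _ ↦ eq_comm
  exact hf ▸ isCyclic_of_surjective f.rangeRestrict f.rangeRestrict_surjective

lemma index_frattini [Fact p.Prime] (hm : m ≠ 0) (hn : n ≠ 0) :
    (frattini (GCar p m n d)).index = p ^ 2 := by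
  have : Finite (GCar p m n d) :=
    Nat.finite_of_card_ne_zero (natCard_eq.trans_ne (NeZero.ne _))
  rw [index_frattini_of_surjective abelianProj_surjective
    (ker_abelianProj.trans_le (commutator_le_frattini_of_isPGroup isPGroup)),
    index_frattini_prod_zmod_prime_pow hm hn]

end GCar

theorem index_nonunits_eq_general {G : Type*} [Group G] [IsCyclic (commutator G)]
    (hodd : Odd (Nat.card G)) (hG : ¬IsMulCommutative G) {p : ℕ} (hp : p.Prime)
    (hΦ : (frattini G).index = p ^ 2) {R : Type*} [LeftNearring R] {L : AddSubgroup R}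
    (hL : ∀ x : R, x ∈ L ↔ ¬IsUnit x) (e : Multiplicative R ≃* G) :
    L.index = p ∧ Nat.card Rˣ = Nat.card G / p * (p - 1) := by
  have hcard : Nat.card R = Nat.card G := Nat.card_congr e.toEquiv
  have hoddR : Odd (Nat.card R) := hcard ▸ hodd
  have : Finite R := Nat.finite_of_card_ne_zero hoddR.pos.ne'
  have hcomm : ¬IsMulCommutative (Multiplicative R) := fun _ ↦
    hG (.of_comm fun x y ↦ e.symm.injective (by rw [map_mul, map_mul, mul_comm']))
  have hcommutator : (commutator G).map e.symm.toMonoidHom = commutator (Multiplicative R) :=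
    map_commutator_mulEquiv e.symm
  have : IsCyclic (commutator (Multiplicative R)) := by
    rw [← hcommutator]
    exact (MulEquiv.isCyclic (e.symm.subgroupMap (commutator G))).mp ‹_›
  have hindex : L.index = p :=
    LeftNearring.index_nonunits_eq_of_index_frattini hoddR hcomm hp
      ((index_frattini_congr e).trans hΦ) hL
  refine ⟨hindex, ?_⟩
  rw [LeftNearring.card_units_eq hL, ← hcard, ← L.card_mul_index, hindex,
    Nat.mul_div_cancel _ hp.pos]

/-- Let `R` be a local nearring whose additive group is isomorphic to
`G(p^m, p^n, p^d)` (`p` an odd prime, `1 ≤ d ≤ n ≤ m`). Then the subgroup `L` of all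
non-invertible elements has index `p` in `(R,+)`, and the multiplicative group `R*`
has order `p^(m+n+d-1)·(p-1)`. -/
theorem index_nonunits_eq (p m n d : ℕ) (hp : p.Prime) (hodd : Odd p)
    (hd : 1 ≤ d) (hdn : d ≤ n) (hnm : n ≤ m)
    (R : Type*) [LeftNearring R]
    (L : AddSubgroup R) (hL : ∀ x : R, x ∈ L ↔ ¬IsUnit x) :
    letI : Group (GCar p m n d) := Ggroup p m n d hdn (hdn.trans hnm)
    Nonempty (Multiplicative R ≃* GCar p m n d) →
      L.index = p ∧ Nat.card Rˣ = p ^ (m + n + d - 1) * (p - 1) := by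
  rintro ⟨e⟩
  have : Fact p.Prime := ⟨hp⟩
  have : Fact (d ≤ n) := ⟨hdn⟩
  have : Fact (d ≤ m) := ⟨hdn.trans hnm⟩
  have hcard : Nat.card (GCar p m n d) = p ^ (m + n + d) := GCar.natCard_eq
  have hdiv : p ^ (m + n + d) / p = p ^ (m + n + d - 1) :=
    Nat.div_eq_of_eq_mul_left hp.pos (Nat.pow_pred_mul (by lia)).symm
  rw [← hdiv, ← hcard]
  exact index_nonunits_eq_general (hcard ▸ hodd.pow)
    (GCar.not_isMulCommutative (Nat.one_lt_pow (Nat.one_le_iff_ne_zero.mp hd) hp.one_lt).ne') hp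
    (GCar.index_frattini (by lia) (by lia)) hL e
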